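/- There is an absolute constant C > 0 such that the following holds. Let ℓ, h, k ∈ ℕ with 1 ≤ h < k and gcd(h,k) = 1, let h̄ be any integer with h·h̄ ≡ 1 (mod k), and let v_0, …, v_r be the denominators of the convergents of the continued fraction expansion of h/k. Then for every α ∈ (1/k)·ℤ one has |V₁(h̄/k, α)| ≤ (1/k)·∑_{m=1}^{r} v_m · log(v_m/v_{m−1}) + C. -/

import Mathlib

open Real Filter Finset

/-- The sawtooth function `((x))`: `0` if `x ∈ ℤ`, and `1/2 - {x}` otherwise. -/
noncomputable def sawtooth (x : ℝ) : ℝ := if Int.fract x = 0 then 0 else 1 / 2 - Int.fract x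

/-- Partial sums of the series defining `V₁(x, α) = 2 ∑_{m≥1} (cos(2πmα)/m)·((mx))`. -/
noncomputable def V1sum (x α : ℝ) (M : ℕ) : ℝ :=
  2 * ∑ m ∈ Finset.Icc 1 M, Real.cos (2 * π * m * α) / m * sawtooth (m * x)

noncomputable def psiF (x : ℝ) : ℝ := Int.fract x - 1 / 2

noncomputable def TF (n : ℕ) (θ β : ℝ) : ℝ := ∑ c ∈ Finset.range n, psiF (c * θ + β)

noncomputable def QF (θ y : ℝ) : ℝ := y * (y - 1) / (2 * θ) - y / 2

lemma psiF_eq_of (x : ℝ) (n : ℤ) (y : ℝ) (h0 : 0 ≤ y) (h1 : y < 1) (h : x = n + y) :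
    psiF x = y - 1 / 2 := by
  unfold psiF
  rw [h, Int.fract_intCast_add, Int.fract_eq_self.2 ⟨h0, h1⟩]

lemma psiF_abs (x : ℝ) : |psiF x| ≤ 1 / 2 := by
  unfold psiF
  have h0 := Int.fract_nonneg x
  have h1 := Int.fract_lt_one x
  rw [abs_le]; constructor <;> linarith

lemma psiF_add_int (x : ℝ) (n : ℤ) : psiF (x + n) = psiF x := by
  unfold psiF; rw [Int.fract_add_intCast]

lemma TF_abs (n : ℕ) (θ β : ℝ) : |TF n θ β| ≤ n / 2 := by
  unfold TF
  calc _ ≤ ∑ c ∈ Finset.range n, |psiF (c * θ + β)| := Finset.abs_sum_le_sum_abs _ _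
    _ ≤ ∑ c ∈ Finset.range n, (1 / 2 : ℝ) := Finset.sum_le_sum fun _ _ => psiF_abs _
    _ = n / 2 := by simp; ring

lemma TF_add_nat (n : ℕ) (θ β : ℝ) (b : ℕ) : TF n (b + θ) β = TF n θ β := by
  unfold TF
  refine Finset.sum_congr rfl fun c _ => ?_
  have : (c : ℝ) * (b + θ) + β = (c * θ + β) + ((c * b : ℤ) : ℝ) := by push_cast; ring
  rw [this, psiF_add_int]

lemma TF_ident (θ β : ℝ) (h0 : 0 < θ) (h1 : θ ≤ 1) (n : ℕ) :
    ∃ N : ℕ, ⌊n * θ + β⌋ = ⌊β⌋ + N ∧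
      TF n θ β = QF θ (Int.fract (n * θ + β)) - QF θ (Int.fract β) +
        ∑ j ∈ Finset.range N, psiF ((β - ⌊β⌋ - 1 - j) / θ) := by
  induction n with
  | zero => exact ⟨0, by simp, by simp [TF]⟩
  | succ n ih =>
    obtain ⟨N, hN, hT⟩ := ih
    have hs : TF (n + 1) θ β = TF n θ β + psiF (n * θ + β) := by
      unfold TF; rw [Finset.sum_range_succ]
    have hy0 := Int.fract_nonneg (n * θ + β)
    have hy1 := Int.fract_lt_one (n * θ + β)
    have hfl : (n * θ + β : ℝ) = ((⌊β⌋ + N : ℤ) : ℝ) + Int.fract (n * θ + β) := by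
      rw [← hN]; exact (Int.floor_add_fract _).symm
    rw [hs, hT]
    have hps : psiF (n * θ + β) = Int.fract (n * θ + β) - 1 / 2 := rfl
    rw [hps]
    set y := Int.fract (n * θ + β) with hy
    have hnext : ((n + 1 : ℕ) : ℝ) * θ + β = ((⌊β⌋ + N : ℤ) : ℝ) + (y + θ) := by
      push_cast at hfl ⊢; linarith
    by_cases hlt : y + θ < 1
    · refine ⟨N, ?_, ?_⟩
      · rw [hnext, Int.floor_intCast_add, Int.floor_eq_zero_iff.2 ⟨by linarith, hlt⟩]; simp
      · rw [hnext, Int.fract_intCast_add, Int.fract_eq_self.2 ⟨by linarith, hlt⟩]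
        have : QF θ (y + θ) = QF θ y + (y - 1 / 2) := by
          unfold QF; field_simp; ring
        rw [this]; ring
    · push Not at hlt
      have hnext2 : ((n + 1 : ℕ) : ℝ) * θ + β = ((⌊β⌋ + N + 1 : ℤ) : ℝ) + (y + θ - 1) := by
        rw [hnext]; push_cast; ring
      have hz0 : 0 ≤ y + θ - 1 := by linarith
      have hz1 : y + θ - 1 < 1 := by linarith
      refine ⟨N + 1, ?_, ?_⟩
      · rw [hnext2, Int.floor_intCast_add, Int.floor_eq_zero_iff.2 ⟨hz0, hz1⟩]
        push_cast; ring
      · rw [Finset.sum_range_succ]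
        have hz : psiF ((β - ⌊β⌋ - 1 - N) / θ) = (y + θ - 1) / θ - 1 / 2 := by
          apply psiF_eq_of _ (-(n + 1 : ℤ))
          · apply div_nonneg <;> linarith
          · rw [div_lt_one h0]; linarith
          · push_cast at hnext2 ⊢
            field_simp
            linarith
        rw [hnext2, Int.fract_intCast_add, Int.fract_eq_self.2 ⟨hz0, hz1⟩, hz]
        have : QF θ (y + θ - 1) = QF θ y + (y - 1 / 2) - ((y + θ - 1) / θ - 1 / 2) := by
          unfold QF; field_simp; ring
        rw [this]; ring

lemma QF_bounds (θ y : ℝ) (h0 : 0 < θ) (h1 : θ ≤ 1) (hy0 : 0 ≤ y) (hy1 : y < 1) :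
    QF θ y ≤ 0 ∧ -(1 / θ) ≤ QF θ y := by
  unfold QF
  constructor
  · have : y * (y - 1) / (2 * θ) ≤ 0 := by
      apply div_nonpos_of_nonpos_of_nonneg <;> nlinarith
    linarith
  · have h2 : -(1/θ) - (y * (y - 1) / (2 * θ) - y / 2) = (-2 - y*(y-1) + y * θ)/(2*θ) := by
      field_simp; ring
    have : (-2 - y*(y-1) + y * θ)/(2*θ) ≤ 0 := by
      apply div_nonpos_of_nonpos_of_nonneg <;> nlinarith
    linarith

lemma TF_recip (θ β : ℝ) (h0 : 0 < θ) (h1 : θ ≤ 1) (n : ℕ) :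
    ∃ (N : ℕ) (β' : ℝ), (N : ℝ) ≤ n * θ + 1 ∧ |TF n θ β| ≤ 1 / θ + |TF N (1 / θ) β'| := by
  obtain ⟨N, hN, hT⟩ := TF_ident θ β h0 h1 n
  refine ⟨N, (β - ⌊β⌋ - N) / θ, ?_, ?_⟩
  · have a1 := Int.floor_le (n * θ + β)
    have a2 := Int.lt_floor_add_one β
    rw [hN] at a1; push_cast at a1; linarith
  · have : ∑ j ∈ Finset.range N, psiF ((β - ⌊β⌋ - 1 - j) / θ) = TF N (1 / θ) ((β - ⌊β⌋ - N) / θ) := by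
      unfold TF
      rw [← Finset.sum_range_reflect]
      refine Finset.sum_congr rfl fun j hj => ?_
      have hj' := Finset.mem_range.1 hj
      congr 1
      have : ((N - 1 - j : ℕ) : ℝ) = N - 1 - j := by
        rw [Nat.cast_sub (by omega), Nat.cast_sub (by omega)]; simp
      rw [this]; field_simp; ring
    rw [hT, this]
    obtain ⟨q1, q2⟩ := QF_bounds θ _ h0 h1 (Int.fract_nonneg (n * θ + β)) (Int.fract_lt_one _)
    obtain ⟨q3, q4⟩ := QF_bounds θ _ h0 h1 (Int.fract_nonneg β) (Int.fract_lt_one _)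
    refine (abs_add_le _ _).trans ?_
    gcongr
    rw [abs_le]; constructor <;> linarith

lemma TF_chain (r : ℕ) (b v : ℕ → ℕ) (hpos : ∀ m, m ≤ r → 1 ≤ v m)
    (hmono : ∀ m, m + 1 ≤ r → v m ≤ v (m + 1))
    (hrec : ∀ m, m + 2 ≤ r → v (m + 2) = b (m + 2) * v (m + 1) + v m)
    (m l : ℕ) (hl : m + (l + 1) ≤ r) : ∀ (n : ℕ) (β : ℝ),
    |TF n ((v (m + l) : ℝ) / v (m + l + 1)) β| ≤
      2 * ∑ i ∈ Finset.range (l + 1), (v (m + i + 1) : ℝ) / v (m + i) +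
        n * v m / (2 * v (m + l + 1)) := by
  have key : ∀ l, m + (l + 1) ≤ r → ∀ (n : ℕ) (β : ℝ), ∃ (N : ℕ) (β' : ℝ),
      (N : ℝ) ≤ n * ((v (m + l) : ℝ) / v (m + l + 1)) + 1 ∧
      |TF n ((v (m + l) : ℝ) / v (m + l + 1)) β| ≤ (v (m + l + 1) : ℝ) / v (m + l) +
        |TF N ((v (m + l + 1) : ℝ) / v (m + l)) β'| ∧ 1 ≤ (v (m + l + 1) : ℝ) / v (m + l) := by
    intro l hl n β
    have p1 : (0 : ℝ) < v (m + l) := by exact_mod_cast hpos (m + l) (by omega)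
    have p2 : (0 : ℝ) < v (m + l + 1) := by exact_mod_cast hpos (m + l + 1) (by omega)
    have p3 : (v (m + l) : ℝ) ≤ v (m + l + 1) := by exact_mod_cast hmono (m + l) (by omega)
    obtain ⟨N, β', hN, hT⟩ := TF_recip ((v (m + l) : ℝ) / v (m + l + 1)) β (by positivity)
      (by rw [div_le_one p2]; exact p3) n
    rw [one_div_div] at hT
    exact ⟨N, β', hN, hT, by rw [le_div_iff₀ p1]; linarith⟩
  induction l with
  | zero =>
    intro n β
    obtain ⟨N, β', hN, hT, h1⟩ := key 0 hl n β
    have p2 : (0 : ℝ) < v (m + 1) := by exact_mod_cast hpos (m + 1) (by omega)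
    have := TF_abs N ((v (m + 0 + 1) : ℝ) / v (m + 0)) β'
    simp only [add_zero, zero_add, Finset.sum_range_one] at *
    have e : (n : ℝ) * v m / (2 * v (m + 1)) = n * (v m / v (m + 1)) / 2 := by field_simp
    rw [e]; linarith
  | succ l ih =>
    intro n β
    obtain ⟨N, β', hN, hT, h1⟩ := key (l + 1) hl n β
    have ih' := ih (by omega) N β'
    have p0 : (0 : ℝ) < v m := by exact_mod_cast hpos m (by omega)
    have p1 : (0 : ℝ) < v (m + (l + 1)) := by exact_mod_cast hpos (m + (l + 1)) (by omega)
    have p2 : (0 : ℝ) < v (m + (l + 1) + 1) := by exact_mod_cast hpos (m + (l + 1) + 1) (by omega)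
    have hr := hrec (m + l) (by omega)
    have e : (v (m + (l + 1) + 1) : ℝ) / v (m + (l + 1)) =
        (b (m + l + 2) : ℕ) + (v (m + l) : ℝ) / v (m + l + 1) := by
      have : (v (m + (l + 1) + 1) : ℝ) = b (m + l + 2) * v (m + l + 1) + v (m + l) := by
        exact_mod_cast hr
      rw [this]
      have p1' : (v (m + l + 1) : ℝ) ≠ 0 := p1.ne'
      rw [← add_assoc]
      field_simp
    rw [e, TF_add_nat, ← e] at hT
    rw [Finset.sum_range_succ]
    have mm : ∀ l, m + l ≤ r → v m ≤ v (m + l) := by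
      intro l
      induction l with
      | zero => intro _; exact le_rfl
      | succ l ih => intro h; exact (ih (by omega)).trans (hmono (m + l) (by omega))
    have hm : (v m : ℝ) ≤ v (m + (l + 1)) := by exact_mod_cast mm (l + 1) (by omega)
    have e2 : (N : ℝ) * v m / (2 * v (m + l + 1)) ≤ n * v m / (2 * v (m + (l + 1) + 1)) + 1 / 2 := by
      calc (N : ℝ) * v m / (2 * v (m + l + 1)) ≤
          (n * ((v (m + (l + 1)) : ℝ) / v (m + (l + 1) + 1)) + 1) * v m / (2 * v (m + (l + 1))) := by
            rw [← add_assoc]; rw [← add_assoc] at hN; gcongr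
        _ = n * v m / (2 * v (m + (l + 1) + 1)) + (v m / v (m + (l + 1))) / 2 := by field_simp
        _ ≤ _ := by gcongr; rw [div_le_one p1]; exact hm
    linarith

lemma saw_eq_psi (x : ℝ) : sawtooth x = (psiF (-x) - psiF x) / 2 := by
  unfold sawtooth psiF
  split_ifs with h
  · have : Int.fract (-x) = 0 := Int.fract_neg_eq_zero.2 h
    rw [h, this]; ring
  · rw [Int.fract_neg h]; ring

lemma saw_neg (x : ℝ) : sawtooth (-x) = -sawtooth x := by
  rw [saw_eq_psi, saw_eq_psi, neg_neg]; ring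

lemma saw_add_int (x : ℝ) (n : ℤ) : sawtooth (x + n) = sawtooth x := by
  unfold sawtooth; rw [Int.fract_add_intCast]

lemma saw_abs (x : ℝ) : |sawtooth x| ≤ 1 / 2 := by
  rw [saw_eq_psi]
  have h1 := abs_le.1 (psiF_abs x)
  have h2 := abs_le.1 (psiF_abs (-x))
  rw [abs_le]; constructor <;> linarith [h1.1, h1.2, h2.1, h2.2]

lemma saw_sum_bound (n : ℕ) (θ β B : ℝ) (hB : ∀ β', |TF n θ β'| ≤ B) :
    |∑ c ∈ Finset.range n, sawtooth ((c + 1 : ℕ) * θ + β)| ≤ B := by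
  have e : ∑ c ∈ Finset.range n, sawtooth ((c + 1 : ℕ) * θ + β) =
      (TF n θ (-(n * θ + β)) - TF n θ (θ + β)) / 2 := by
    unfold TF
    rw [← Finset.sum_range_reflect (fun c : ℕ => psiF (c * θ + -(n * θ + β))), ← Finset.sum_sub_distrib,
      Finset.sum_div]
    refine Finset.sum_congr rfl fun c hc => ?_
    have hj' := Finset.mem_range.1 hc
    have : ((n - 1 - c : ℕ) : ℝ) = n - 1 - c := by
      rw [Nat.cast_sub (by omega), Nat.cast_sub (by omega)]; simp
    rw [saw_eq_psi, this]
    congr 3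
    · push_cast; ring
    · push_cast; ring
  rw [e]
  have h1 := abs_le.1 (hB (-(n * θ + β)))
  have h2 := abs_le.1 (hB (θ + β))
  rw [abs_le]; constructor <;> linarith [h1.1, h1.2, h2.1, h2.2]

lemma abel_sum (g : ℕ → ℝ) (N : ℕ) :
    ∑ c ∈ Finset.range N, g c / (c + 1) = (∑ c ∈ Finset.range N, g c) / (N + 1) +
      ∑ n ∈ Finset.Ico 1 (N + 1), (∑ c ∈ Finset.range n, g c) / (n * (n + 1)) := by
  induction N with
  | zero => simp
  | succ N ih =>
    rw [Finset.sum_range_succ, ih, Finset.sum_Ico_succ_top (by omega : 1 ≤ N + 1),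
      Finset.sum_range_succ]
    push_cast
    have : (N : ℝ) + 1 ≠ 0 := by positivity
    have : (N : ℝ) + 1 + 1 ≠ 0 := by positivity
    field_simp
    ring

lemma sum_inv_mul (A B : ℕ) (hA : 1 ≤ A) (hAB : A ≤ B) :
    ∑ n ∈ Finset.Ico A B, 1 / ((n : ℝ) * (n + 1)) = 1 / A - 1 / B := by
  induction B, hAB using Nat.le_induction with
  | base => simp
  | succ B hB ih =>
    rw [Finset.sum_Ico_succ_top hB, ih]
    have : (B : ℝ) ≠ 0 := by have : 0 < B := by omega
                             positivity
    have : (A : ℝ) ≠ 0 := by positivity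
    push_cast
    field_simp
    ring

lemma sum_inv_log (A B : ℕ) (hA : 1 ≤ A) (hAB : A ≤ B) :
    ∑ n ∈ Finset.Ico A B, 1 / ((n : ℝ) + 1) ≤ Real.log (B / A) := by
  induction B, hAB using Nat.le_induction with
  | base => simp; 
  | succ B hB ih =>
    rw [Finset.sum_Ico_succ_top hB]
    have hB' : (0 : ℝ) < B := by have : 0 < B := by omega
                                 positivity
    have hA' : (0 : ℝ) < A := by positivity
    have h1 := Real.log_le_sub_one_of_pos (show (0 : ℝ) < B / (B + 1) by positivity)
    have h2 : (B : ℝ) / (B + 1) - 1 = - (1 / (B + 1)) := by field_simp; ring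
    rw [Real.log_div (by positivity) (by positivity)] at h1 ih ⊢
    push_cast
    linarith

lemma block_bound (G : ℕ → ℝ) (E : ℝ) (k w v : ℕ) (hw : 1 ≤ w) (hwv : w ≤ v) (hvk : v ≤ k)
    (hE : 0 ≤ E) (hG : ∀ n, |G n| ≤ E + n * v / (2 * k)) :
    ∑ n ∈ Finset.Ico ⌈(k : ℝ) / v⌉₊ ⌈(k : ℝ) / w⌉₊, |G n| / (n * (n + 1)) ≤
      E * (v / k) + v / (2 * k) * (Real.log (v / w) + 1) := by
  have w0 : (0 : ℝ) < w := by positivity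
  have v0 : (0 : ℝ) < v := by have : 0 < v := by omega
                              positivity
  have k0 : (0 : ℝ) < k := by have : 0 < k := by omega
                              positivity
  have wv : (w : ℝ) ≤ v := by exact_mod_cast hwv
  have wk : (w : ℝ) ≤ k := by exact_mod_cast hwv.trans hvk
  set A := ⌈(k : ℝ) / v⌉₊ with hA
  set B := ⌈(k : ℝ) / w⌉₊ with hB
  have hA1 : 1 ≤ A := Nat.one_le_ceil_iff.2 (by positivity)
  have hAB : A ≤ B := Nat.ceil_mono (by gcongr)
  have A0 : (0 : ℝ) < A := by positivity
  have B0 : (0 : ℝ) < B := by have : 0 < B := by omega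
                              positivity
  have Ale : (k : ℝ) / v ≤ A := Nat.le_ceil _
  have Ble : (B : ℝ) ≤ 2 * (k / w) := by
    have := (Nat.ceil_lt_add_one (show 0 ≤ (k : ℝ) / w by positivity)).le
    have h2 : 1 ≤ (k : ℝ) / w := by rw [le_div_iff₀ w0]; linarith
    linarith
  calc _ ≤ ∑ n ∈ Finset.Ico A B, (E * (1 / ((n : ℝ) * (n + 1))) + v / (2 * k) * (1 / ((n : ℝ) + 1))) := by
        refine Finset.sum_le_sum fun n hn => ?_
        have hn1 : 1 ≤ n := hA1.trans (Finset.mem_Ico.1 hn).1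
        have n0 : (0 : ℝ) < n := by positivity
        calc _ ≤ (E + n * v / (2 * k)) / (n * ((n : ℝ) + 1)) := by gcongr; exact hG n
          _ = _ := by field_simp
    _ = E * (1 / A - 1 / B) + v / (2 * k) * ∑ n ∈ Finset.Ico A B, (1 / ((n : ℝ) + 1)) := by
        rw [Finset.sum_add_distrib, ← Finset.mul_sum, ← Finset.mul_sum, sum_inv_mul A B hA1 hAB]
    _ ≤ _ := by
      have h1 : (1 : ℝ) / A - 1 / B ≤ v / k := by
        have : (1 : ℝ) / A ≤ 1 / (k / v) := by gcongr
        rw [one_div_div] at this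
        have : (0 : ℝ) ≤ 1 / B := by positivity
        linarith
      have h2 : Real.log (B / A) ≤ Real.log (v / w) + 1 := by
        have : (B : ℝ) / A ≤ 2 * (v / w) := by
          calc (B : ℝ) / A ≤ (2 * (k / w)) / (k / v) := by gcongr
            _ = _ := by field_simp
        have h3 := Real.log_le_log (by positivity) this
        rw [Real.log_mul (by norm_num) (by positivity)] at h3
        have := Real.log_two_lt_d9
        linarith
      have h3 := (sum_inv_log A B hA1 hAB).trans h2
      gcongr

lemma sum_v (r : ℕ) (v : ℕ → ℝ) (hpos : ∀ m, m ≤ r → 0 ≤ v m)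
    (hmono : ∀ m, m + 1 ≤ r → v m ≤ v (m + 1))
    (hrec : ∀ m, m + 2 ≤ r → v (m + 1) + v m ≤ v (m + 2)) (s : ℕ) (hs : s ≤ r) :
    ∑ m ∈ Finset.range (s + 1), v m ≤ 3 * v s := by
  have key : ∀ s, s + 1 ≤ r → ∑ m ∈ Finset.range (s + 2), v m ≤ 2 * v (s + 1) + v s := by
    intro s
    induction s with
    | zero =>
      intro h
      rw [Finset.sum_range_succ, Finset.sum_range_one]
      have := hpos 1 h
      simp only [zero_add]
      linarith
    | succ s ih =>
      intro h
      rw [Finset.sum_range_succ]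
      have := ih (by omega)
      have := hrec s (by omega)
      have e : s + 1 + 1 = s + 2 := rfl
      rw [e]
      linarith
  rcases s with _ | s
  · simp; linarith [hpos 0 (by omega)]
  · have := key s hs
    have := hmono s hs
    have e : s + 1 + 1 = s + 2 := rfl
    rw [e]
    linarith

lemma sum_vE (r : ℕ) (v : ℕ → ℝ) (hpos : ∀ m, m ≤ r → 0 < v m)
    (hmono : ∀ m, m + 1 ≤ r → v m ≤ v (m + 1))
    (hrec : ∀ m, m + 2 ≤ r → v (m + 1) + v m ≤ v (m + 2)) (s : ℕ) (hs : s ≤ r) :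
    ∑ m ∈ Finset.range (s + 1), v m * ∑ i ∈ Finset.Ico m s, v (i + 1) / v i ≤ 9 * v s := by
  have hv := sum_v r v (fun m h => (hpos m h).le) hmono hrec
  have key : ∀ s ≤ r, ∑ m ∈ Finset.range (s + 1), v m * ∑ i ∈ Finset.Ico m s, v (i + 1) / v i
      ≤ 3 * ∑ i ∈ Finset.range s, v (i + 1) := by
    intro s
    induction s with
    | zero => intro _; simp
    | succ s ih =>
      intro h
      rw [Finset.sum_range_succ, Finset.Ico_self, Finset.sum_empty, mul_zero, add_zero]
      have : ∑ m ∈ Finset.range (s + 1), v m * ∑ i ∈ Finset.Ico m (s + 1), v (i + 1) / v i =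
          ∑ m ∈ Finset.range (s + 1), v m * ∑ i ∈ Finset.Ico m s, v (i + 1) / v i +
          (∑ m ∈ Finset.range (s + 1), v m) * (v (s + 1) / v s) := by
        rw [Finset.sum_mul, ← Finset.sum_add_distrib]
        refine Finset.sum_congr rfl fun m hm => ?_
        have := Finset.mem_range.1 hm
        rw [Finset.sum_Ico_succ_top (by omega)]; ring
      rw [this, Finset.sum_range_succ (fun i => v (i + 1))]
      have h1 := ih (by omega)
      have p0 := hpos s (by omega)
      have p1 := hpos (s + 1) (by omega)
      have h2 : (∑ m ∈ Finset.range (s + 1), v m) * (v (s + 1) / v s) ≤ (3 * v s) * (v (s + 1) / v s) := by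
        gcongr; exact hv s (by omega)
      have h3 : (3 * v s) * (v (s + 1) / v s) = 3 * v (s + 1) := by field_simp
      linarith
  have h1 := key s hs
  have h2 := hv s hs
  rw [Finset.sum_range_succ'] at h2
  have := hpos 0 (by omega)
  linarith

lemma main_sum (r : ℕ) (k : ℕ) (v : ℕ → ℕ) (hv0 : v 0 = 1) (hk : v r = k)
    (hpos : ∀ m, m ≤ r → 1 ≤ v m)
    (hmono : ∀ m, m + 1 ≤ r → v m ≤ v (m + 1))
    (hrec : ∀ m, m + 2 ≤ r → v (m + 1) + v m ≤ v (m + 2)) (g : ℕ → ℝ)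
    (hG : ∀ m ≤ r, ∀ n : ℕ, |∑ c ∈ Finset.range n, g c| ≤
      2 * ∑ i ∈ Finset.Ico m r, (v (i + 1) : ℝ) / v i + n * v m / (2 * k)) :
    |∑ c ∈ Finset.range (k - 1), g c / (c + 1)| ≤
      1 / (2 * k) * ∑ m ∈ Finset.range r, (v (m + 1) : ℝ) * Real.log (v (m + 1) / v m) + 20 := by
  have hk1 : 1 ≤ k := hk ▸ hpos r le_rfl
  have k0 : (0 : ℝ) < k := by positivity
  have vk : ∀ m ≤ r, v m ≤ k := by
    intro m hm
    rw [← hk]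
    induction r, hm using Nat.le_induction with
    | base => exact le_rfl
    | succ s hs ih => exact (hmono s le_rfl).trans' (by
        have aux : ∀ s', m ≤ s' → s' ≤ s + 1 → v m ≤ v s' := by
          intro s' h1
          induction s', h1 using Nat.le_induction with
          | base => intro _; exact le_rfl
          | succ t ht iht => intro h; exact (iht (by omega)).trans (hmono t h)
        exact aux s hs (by omega))
  set E : ℕ → ℝ := fun m => 2 * ∑ i ∈ Finset.Ico m r, (v (i + 1) : ℝ) / v i with hE
  have hE0 : ∀ m, 0 ≤ E m := fun m => by
    simp only [hE]; positivity
  set G : ℕ → ℝ := fun n => ∑ c ∈ Finset.range n, g c with hGdef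
  have hG' : ∀ m ≤ r, ∀ n : ℕ, |G n| ≤ E m + n * v m / (2 * k) := hG
  have blocks : ∀ j ≤ r, ∑ n ∈ Finset.Ico ⌈(k : ℝ) / v j⌉₊ ⌈(k : ℝ) / v 0⌉₊, |G n| / (n * (n + 1)) ≤
      ∑ m ∈ Finset.range j, (E (m + 1) * (v (m + 1) / k) +
        v (m + 1) / (2 * k) * (Real.log (v (m + 1) / v m) + 1)) := by
    intro j
    induction j with
    | zero => intro _; simp
    | succ j ih =>
      intro hj
      have h1 := ih (by omega)
      have h2 := block_bound G (E (j + 1)) k (v j) (v (j + 1)) (hpos j (by omega)) (hmono j hj)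
        (vk _ hj) (hE0 _) (hG' _ hj)
      rw [Finset.sum_range_succ]
      have pj : (0 : ℝ) < v j := by exact_mod_cast hpos j (by omega)
      have p0 : (0 : ℝ) < v 0 := by exact_mod_cast hpos 0 (by omega)
      have mj : (v j : ℝ) ≤ v (j + 1) := by exact_mod_cast hmono j hj
      have m0 : (v 0 : ℝ) ≤ v j := by rw [hv0]; exact_mod_cast hpos j (by omega)
      rw [← Finset.sum_Ico_consecutive _ (m := ⌈(k : ℝ) / v (j + 1)⌉₊) (n := ⌈(k : ℝ) / v j⌉₊)
        (Nat.ceil_mono (by gcongr)) (Nat.ceil_mono (by gcongr))]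
      linarith
  have hb := blocks r le_rfl
  have c1 : ⌈(k : ℝ) / v r⌉₊ = 1 := by rw [hk, div_self k0.ne']; simp
  have c2 : ⌈(k : ℝ) / v 0⌉₊ = k := by rw [hv0]; simp
  rw [c1, c2] at hb
  have hvr := sum_v r (fun m => (v m : ℝ)) (fun m _ => by positivity)
    (fun m h => by exact_mod_cast hmono m h) (fun m h => by exact_mod_cast hrec m h) r le_rfl
  have hvE := sum_vE r (fun m => (v m : ℝ)) (fun m h => by exact_mod_cast hpos m h)
    (fun m h => by exact_mod_cast hmono m h) (fun m h => by exact_mod_cast hrec m h) r le_rfl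
  simp only [hk] at hvr hvE
  rw [Finset.sum_range_succ'] at hvr hvE
  rw [abel_sum]
  have kk : k - 1 + 1 = k := by omega
  have kk' : ((k - 1 : ℕ) : ℝ) + 1 = k := by exact_mod_cast kk
  rw [kk, kk']
  have hbd : |(∑ c ∈ Finset.range (k - 1), g c) / (k : ℝ)| ≤ 1 / 2 := by
    rw [abs_div, abs_of_pos k0, div_le_iff₀ k0]
    have := hG r le_rfl (k - 1)
    rw [Finset.Ico_self, hk] at this
    simp only [Finset.sum_empty, mul_zero, zero_add] at this
    have e : ((k - 1 : ℕ) : ℝ) * k / (2 * k) = ((k - 1 : ℕ) : ℝ) / 2 := by field_simp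
    rw [e] at this
    linarith
  have habs : |∑ n ∈ Finset.Ico 1 k, G n / ((n : ℝ) * (n + 1))| ≤
      ∑ n ∈ Finset.Ico 1 k, |G n| / ((n : ℝ) * (n + 1)) := by
    refine (Finset.abs_sum_le_sum_abs _ _).trans_eq (Finset.sum_congr rfl fun n _ => ?_)
    rw [abs_div, abs_of_nonneg (by positivity : (0 : ℝ) ≤ (n : ℝ) * (n + 1))]
  have expand : ∑ m ∈ Finset.range r, (E (m + 1) * (v (m + 1) / k) +
        v (m + 1) / (2 * k) * (Real.log (v (m + 1) / v m) + 1)) =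
      (2 / k) * ∑ m ∈ Finset.range r, v (m + 1) * ∑ i ∈ Finset.Ico (m + 1) r, (v (i + 1) : ℝ) / v i +
      1 / (2 * k) * ∑ m ∈ Finset.range r, (v (m + 1) : ℝ) * Real.log (v (m + 1) / v m) +
      1 / (2 * k) * ∑ m ∈ Finset.range r, (v (m + 1) : ℝ) := by
    rw [Finset.mul_sum, Finset.mul_sum, Finset.mul_sum, ← Finset.sum_add_distrib, ← Finset.sum_add_distrib]
    refine Finset.sum_congr rfl fun m _ => ?_
    simp only [hE]
    field_simp
    ring
  rw [expand] at hb
  have f1 : (2 / k) * ∑ m ∈ Finset.range r, v (m + 1) * ∑ i ∈ Finset.Ico (m + 1) r, (v (i + 1) : ℝ) / v i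
      ≤ 18 := by
    have nn : 0 ≤ (v 0 : ℝ) * ∑ i ∈ Finset.Ico 0 r, (v (i + 1) : ℝ) / v i := by positivity
    calc _ ≤ (2 / (k : ℝ)) * (9 * k) := by gcongr; linarith
      _ = 18 := by field_simp; norm_num
  have f2 : 1 / (2 * k) * ∑ m ∈ Finset.range r, (v (m + 1) : ℝ) ≤ 3 / 2 := by
    have nn : 0 ≤ (v 0 : ℝ) := by positivity
    calc _ ≤ (1 / (2 * (k : ℝ))) * (3 * k) := by gcongr; linarith
      _ = 3 / 2 := by field_simp
  have := abs_add_le ((∑ c ∈ Finset.range (k - 1), g c) / (k : ℝ)) (∑ n ∈ Finset.Ico 1 k, G n / ((n : ℝ) * (n + 1)))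
  linarith

lemma sum_cos_all (k : ℕ) (hk : 1 ≤ k) (n : ℤ) :
    ∑ j ∈ Finset.range k, Real.cos (2 * π * j * n / k) = if (k : ℤ) ∣ n then (k : ℝ) else 0 := by
  have k0 : (k : ℂ) ≠ 0 := by exact_mod_cast (by omega : k ≠ 0)
  have hre : ∑ j ∈ Finset.range k, Real.cos (2 * π * j * n / k) =
      (∑ j ∈ Finset.range k, (Complex.exp (2 * π * Complex.I * (n / k))) ^ j).re := by
    rw [Complex.re_sum]
    refine Finset.sum_congr rfl fun j _ => ?_
    rw [← Complex.exp_nat_mul]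
    have : (j : ℂ) * (2 * π * Complex.I * (n / k)) = ((2 * π * j * n / k : ℝ) : ℂ) * Complex.I := by
      push_cast; ring
    rw [this, Complex.exp_ofReal_mul_I_re]
  rw [hre]
  have hone : Complex.exp (2 * π * Complex.I * (n / k)) = 1 ↔ (k : ℤ) ∣ n := by
    rw [Complex.exp_eq_one_iff]
    constructor
    · rintro ⟨m, hm⟩
      refine ⟨m, ?_⟩
      have h2 : (2 * π * Complex.I : ℂ) ≠ 0 := Complex.two_pi_I_ne_zero
      rw [mul_comm (m : ℂ)] at hm
      have := mul_left_cancel₀ h2 hm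
      rw [div_eq_iff k0] at this
      have h3 : n = m * k := by exact_mod_cast this
      rw [h3]; ring
    · rintro ⟨m, rfl⟩
      refine ⟨m, ?_⟩
      push_cast
      field_simp
  split_ifs with h
  · rw [hone.2 h]; simp
  · have hne : Complex.exp (2 * π * Complex.I * (n / k)) ≠ 1 := fun h' => h (hone.1 h')
    rw [geom_sum_eq hne, ← Complex.exp_nat_mul]
    have : Complex.exp ((k : ℂ) * (2 * π * Complex.I * (n / k))) = 1 := by
      rw [Complex.exp_eq_one_iff]; exact ⟨n, by field_simp⟩
    rw [this]; simp

noncomputable def cotw (k j : ℕ) : ℝ := Real.cos (π * (j + 1) / k) / Real.sin (π * (j + 1) / k)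

noncomputable def FF (k : ℕ) (n : ℤ) : ℝ :=
  ∑ j ∈ Finset.range (k - 1), cotw k j * Real.sin (2 * π * (j + 1) * n / k)

lemma sum_cos_pos (k : ℕ) (hk : 1 ≤ k) (n : ℤ) :
    ∑ j ∈ Finset.range (k - 1), Real.cos (2 * π * (j + 1) * n / k) =
      (if (k : ℤ) ∣ n then (k : ℝ) else 0) - 1 := by
  rw [← sum_cos_all k hk n]
  obtain ⟨k', rfl⟩ : ∃ k', k = k' + 1 := ⟨k - 1, by omega⟩
  rw [Finset.sum_range_succ' _ k']
  simp

lemma sin_pos_j (k j : ℕ) (hj : j < k - 1) : 0 < Real.sin (π * (j + 1) / k) := by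
  have k0 : (0 : ℝ) < k := by exact_mod_cast (by omega : 0 < k)
  apply Real.sin_pos_of_pos_of_lt_pi
  · positivity
  · rw [div_lt_iff₀ k0]
    have : (j : ℝ) + 1 < k := by exact_mod_cast (by omega : j + 1 < k)
    have := Real.pi_pos
    gcongr

lemma FF_succ (k : ℕ) (hk : 1 ≤ k) (n : ℤ) : FF k (n + 1) = FF k n +
    ((if (k : ℤ) ∣ n + 1 then (k : ℝ) else 0) - 1 + ((if (k : ℤ) ∣ n then (k : ℝ) else 0) - 1)) := by
  rw [← sum_cos_pos k hk, ← sum_cos_pos k hk]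
  unfold FF
  rw [← Finset.sum_add_distrib, ← Finset.sum_add_distrib]
  refine Finset.sum_congr rfl fun j hj => ?_
  have hs := sin_pos_j k j (Finset.mem_range.1 hj)
  unfold cotw
  have e1 : 2 * π * ((j : ℝ) + 1) * ((n + 1 : ℤ) : ℝ) / k =
    2 * π * (j + 1) * n / k + 2 * (π * (j + 1) / k) := by push_cast; ring
  rw [e1]
  set A := 2 * π * ((j : ℝ) + 1) * n / k
  set B := π * ((j : ℝ) + 1) / k
  rw [Real.sin_add, Real.cos_add, Real.sin_two_mul, Real.cos_two_mul]
  have : Real.sin B ≠ 0 := hs.ne'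
  field_simp
  have h2 := Real.sin_sq B
  linear_combination (2 * Real.sin A * Real.cos B) * h2

lemma FF_val (k : ℕ) (hk : 1 ≤ k) (n : ℕ) (hn : n + 1 < k) : FF k ((n + 1 : ℕ) : ℤ) = k - 2 * (n + 1) := by
  induction n with
  | zero =>
    have := FF_succ k hk 0
    have h0 : FF k 0 = 0 := by simp [FF]
    have h1 : ¬ ((k : ℤ) ∣ 0 + 1) := by
      intro h
      have := Int.le_of_dvd (by norm_num) h
      omega
    rw [if_neg h1, h0] at this
    simp at this ⊢
    rw [this]; ring
  | succ n ih =>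
    have h2 := FF_succ k hk ((n + 1 : ℕ) : ℤ)
    have nd : ∀ m : ℕ, 0 < m → m < k → ¬ ((k : ℤ) ∣ (m : ℤ)) := by
      intro m h1 h2 h
      have := Int.le_of_dvd (by exact_mod_cast h1) h
      omega
    rw [if_neg (by exact_mod_cast nd (n + 2) (by omega) hn), if_neg (nd (n + 1) (by omega) (by omega)),
      ih (by omega)] at h2
    push_cast at h2 ⊢
    rw [h2]; ring

lemma saw_fourier (k : ℕ) (hk : 1 ≤ k) (n : ℤ) : sawtooth ((n : ℝ) / k) = 1 / (2 * k) * FF k n := by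
  have k0 : (0 : ℝ) < k := by positivity
  have hkz : (0 : ℤ) < k := by exact_mod_cast hk
  obtain ⟨t, ht⟩ := Int.eq_ofNat_of_zero_le (Int.emod_nonneg n hkz.ne')
  have htk : t < k := by
    have := Int.emod_lt_of_pos n hkz
    omega
  have hn : n = t + k * (n / k) := by
    have := Int.emod_add_mul_ediv n k
    rw [ht] at this; exact this.symm
  set q := n / (k : ℤ)
  have e1 : (n : ℝ) / k = (t : ℝ) / k + (q : ℤ) := by
    rw [hn]; push_cast; field_simp
  have e2 : FF k n = FF k t := by
    unfold FF
    refine Finset.sum_congr rfl fun j _ => ?_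
    have : 2 * π * ((j : ℝ) + 1) * n / k = 2 * π * ((j : ℝ) + 1) * (t : ℤ) / k +
        (((j + 1) * q : ℤ) : ℝ) * (2 * π) := by
      rw [hn]; push_cast; field_simp
    rw [this, Real.sin_add_int_mul_two_pi]
  rw [e1, e2, saw_add_int]
  rcases t with _ | t
  · simp [FF, sawtooth]
  · rw [FF_val k hk t htk]
    have hf : Int.fract (((t + 1 : ℕ) : ℝ) / k) = ((t + 1 : ℕ) : ℝ) / k := by
      rw [Int.fract_eq_self]
      constructor
      · positivity
      · rw [div_lt_one k0]; exact_mod_cast htk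
    unfold sawtooth
    rw [hf, if_neg (by positivity)]
    push_cast
    field_simp

lemma sin_hasSum (x ρ : ℝ) (h0 : 0 ≤ ρ) (h1 : ρ < 1) :
    HasSum (fun m : ℕ => Real.sin (2 * π * m * x) / m * ρ ^ m)
      (-Complex.arg (1 - ρ * Complex.exp ((2 * π * x : ℝ) * Complex.I))) := by
  have hz : ‖(ρ : ℂ) * Complex.exp ((2 * π * x : ℝ) * Complex.I)‖ < 1 := by
    rw [norm_mul, Complex.norm_exp_ofReal_mul_I, mul_one, Complex.norm_real, Real.norm_eq_abs,
      abs_of_nonneg h0]; exact h1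
  have := Complex.hasSum_im (Complex.hasSum_taylorSeries_neg_log hz)
  rw [Complex.neg_im, Complex.log_im] at this
  refine this.congr_fun ?_
  intro m
  rw [mul_pow, ← Complex.exp_nat_mul]
  have e : (m : ℂ) * ((2 * π * x : ℝ) * Complex.I) = ((2 * π * m * x : ℝ) : ℂ) * Complex.I := by
    push_cast; ring
  rw [e, ← Complex.ofReal_pow, ← Complex.ofReal_natCast, Complex.div_ofReal_im, Complex.im_ofReal_mul,
    Complex.exp_ofReal_mul_I_im]
  ring

lemma arg_tendsto (x : ℝ) :
    Tendsto (fun ρ : ℝ => -Complex.arg (1 - ρ * Complex.exp ((2 * π * x : ℝ) * Complex.I)))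
      (nhdsWithin 1 (Set.Iio 1)) (nhds (π * sawtooth x)) := by
  have hper : Complex.exp ((2 * π * x : ℝ) * Complex.I) =
      Complex.exp ((2 * π * Int.fract x : ℝ) * Complex.I) := by
    have : ((2 * π * x : ℝ) : ℂ) * Complex.I = (2 * π * Int.fract x : ℝ) * Complex.I +
        (⌊x⌋ : ℤ) * (2 * π * Complex.I) := by
      conv_lhs => rw [← Int.floor_add_fract x]
      push_cast; ring
    rw [this, Complex.exp_add, Complex.exp_int_mul_two_pi_mul_I, mul_one]
  rw [hper]
  unfold sawtooth
  set t := Int.fract x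
  have t1 : t < 1 := Int.fract_lt_one x
  split_ifs with h
  · rw [h]
    have : ∀ᶠ ρ : ℝ in nhdsWithin 1 (Set.Iio 1),
        (0 : ℝ) = -Complex.arg (1 - ρ * Complex.exp ((2 * π * 0 : ℝ) * Complex.I)) := by
      filter_upwards [self_mem_nhdsWithin] with ρ hρ
      have e : (1 - ρ * Complex.exp ((2 * π * 0 : ℝ) * Complex.I) : ℂ) = ((1 - ρ : ℝ) : ℂ) := by
        simp
      rw [e, Complex.arg_ofReal_of_nonneg (by linarith [Set.mem_Iio.1 hρ])]; simp
    rw [mul_zero π]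
    exact Tendsto.congr' this tendsto_const_nhds
  · have t0 : 0 < t := lt_of_le_of_ne (Int.fract_nonneg x) (Ne.symm h)
    have hs : 0 < Real.sin (π * t) := by
      apply Real.sin_pos_of_pos_of_lt_pi
      · positivity
      · nlinarith [Real.pi_pos]
    have key : (1 - (1 : ℝ) * Complex.exp ((2 * π * t : ℝ) * Complex.I) : ℂ) =
        ((2 * Real.sin (π * t) : ℝ) : ℂ) * (Complex.cos ((π * t - π / 2 : ℝ) : ℂ) +
          Complex.sin ((π * t - π / 2 : ℝ) : ℂ) * Complex.I) := by
      rw [Complex.exp_mul_I, ← Complex.ofReal_cos, ← Complex.ofReal_sin, ← Complex.ofReal_cos,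
        ← Complex.ofReal_sin, Real.cos_sub_pi_div_two, Real.sin_sub_pi_div_two]
      have e : 2 * π * t = 2 * (π * t) := by ring
      rw [e, Real.sin_two_mul, Real.cos_two_mul, ]
      have h2 := Real.sin_sq (π * t)
      have h3 : (2 * Real.cos (π * t) ^ 2 - 1 : ℝ) = 1 - 2 * Real.sin (π * t) ^ 2 := by linarith
      rw [h3]
      push_cast
      ring
    have harg : Complex.arg (1 - (1 : ℝ) * Complex.exp ((2 * π * t : ℝ) * Complex.I)) = π * t - π / 2 := by
      rw [key, Complex.arg_mul_cos_add_sin_mul_I (by positivity)]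
      constructor <;> nlinarith [Real.pi_pos]
    have hval : π * (1 / 2 - t) = -Complex.arg (1 - (1 : ℝ) * Complex.exp ((2 * π * t : ℝ) * Complex.I)) := by
      rw [harg]; ring
    rw [hval]
    have hslit : (1 - (1 : ℝ) * Complex.exp ((2 * π * t : ℝ) * Complex.I) : ℂ) ∈ Complex.slitPlane := by
      rw [Complex.mem_slitPlane_iff_arg]
      rw [harg]
      refine ⟨by nlinarith [Real.pi_pos], ?_⟩
      intro h0
      rw [h0, Complex.arg_zero] at harg
      rw [key] at h0
      have := congrArg (‖·‖) h0
      simp only [norm_mul, Complex.norm_real, norm_zero, mul_eq_zero] at this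
      rw [← Complex.exp_mul_I, Complex.norm_exp_ofReal_mul_I] at this
      simp [hs.ne'] at this
    have hc : ContinuousAt (fun ρ : ℝ => -Complex.arg (1 - ρ * Complex.exp ((2 * π * t : ℝ) * Complex.I))) 1 := by
      apply ContinuousAt.neg
      refine ContinuousAt.comp (f := fun ρ : ℝ => (1 - ρ * Complex.exp ((2 * π * t : ℝ) * Complex.I) : ℂ))
        (g := Complex.arg) (Complex.continuousAt_arg hslit) ?_
      fun_prop
    exact hc.tendsto.mono_left nhdsWithin_le_nhds

lemma V1_formula (k : ℕ) (hk : 1 ≤ k) (n : ℤ) (α V1 : ℝ)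
    (hV : Tendsto (V1sum ((n : ℝ) / k) α) atTop (nhds V1)) :
    V1 = ∑ j ∈ Finset.range (k - 1), π / (2 * k) * cotw k j *
      (sawtooth ((j + 1 : ℕ) * (n / k) + α) + sawtooth ((j + 1 : ℕ) * (n / k) - α)) := by
  set a : ℕ → ℝ := fun m => 2 * (Real.cos (2 * π * m * α) / m * sawtooth (m * (n / k))) with ha
  have h1 : Tendsto (fun N => ∑ i ∈ Finset.range N, a i) atTop (nhds V1) := by
    rw [← tendsto_add_atTop_iff_nat 1]
    refine hV.congr fun M => ?_
    rw [Finset.sum_range_succ']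
    unfold V1sum
    rw [Finset.mul_sum, Finset.range_eq_Ico, Finset.sum_Ico_add' (fun i => a i) 0 M 1]
    simp only [ha]
    simp
    rfl
  have h2 := Real.tendsto_tsum_powerSeries_nhdsWithin_lt h1
  set A : ℝ → ℝ → ℝ := fun x ρ => -Complex.arg (1 - ρ * Complex.exp ((2 * π * x : ℝ) * Complex.I)) with hA
  have h3 : ∀ᶠ ρ : ℝ in nhdsWithin 1 (Set.Iio 1), ∑' m, a m * ρ ^ m =
      ∑ j ∈ Finset.range (k - 1), 1 / (2 * k) * cotw k j *
        (A ((j + 1 : ℕ) * (n / k) + α) ρ + A ((j + 1 : ℕ) * (n / k) - α) ρ) := by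
    have hpos : ∀ᶠ ρ : ℝ in nhdsWithin 1 (Set.Iio 1), 0 < ρ :=
      nhdsWithin_le_nhds (lt_mem_nhds one_pos)
    filter_upwards [self_mem_nhdsWithin, hpos] with ρ hρ hρ0
    apply HasSum.tsum_eq
    have hh : HasSum (fun m : ℕ => ∑ j ∈ Finset.range (k - 1), 1 / (2 * (k : ℝ)) * cotw k j *
        (Real.sin (2 * π * m * ((j + 1 : ℕ) * (n / k) + α)) / m * ρ ^ m +
          Real.sin (2 * π * m * ((j + 1 : ℕ) * (n / k) - α)) / m * ρ ^ m))
        (∑ j ∈ Finset.range (k - 1), 1 / (2 * k) * cotw k j *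
        (A ((j + 1 : ℕ) * (n / k) + α) ρ + A ((j + 1 : ℕ) * (n / k) - α) ρ)) :=
      hasSum_sum fun j _ => ((sin_hasSum _ ρ hρ0.le hρ).add (sin_hasSum _ ρ hρ0.le hρ)).mul_left _
    refine hh.congr_fun ?_
    intro m
    have e : (m : ℝ) * (n / k) = ((m * n : ℤ) : ℝ) / k := by push_cast; ring
    simp only [ha]
    rw [e, saw_fourier k hk]
    unfold FF
    rw [Finset.mul_sum, Finset.mul_sum, Finset.mul_sum, Finset.sum_mul]
    refine Finset.sum_congr rfl fun j _ => ?_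
    have e1 : 2 * π * m * ((j + 1 : ℕ) * ((n : ℝ) / k) + α) =
      2 * π * ((j : ℝ) + 1) * ((m * n : ℤ) : ℝ) / k + 2 * π * m * α := by push_cast; ring
    have e2 : 2 * π * m * ((j + 1 : ℕ) * ((n : ℝ) / k) - α) =
      2 * π * ((j : ℝ) + 1) * ((m * n : ℤ) : ℝ) / k - 2 * π * m * α := by push_cast; ring
    rw [e1, e2, Real.sin_add, Real.sin_sub]
    ring
  have h4 : Tendsto (fun ρ => ∑ j ∈ Finset.range (k - 1), 1 / (2 * (k : ℝ)) * cotw k j *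
        (A ((j + 1 : ℕ) * (n / k) + α) ρ + A ((j + 1 : ℕ) * (n / k) - α) ρ))
      (nhdsWithin 1 (Set.Iio 1)) (nhds (∑ j ∈ Finset.range (k - 1), 1 / (2 * (k : ℝ)) * cotw k j *
        (π * sawtooth ((j + 1 : ℕ) * (n / k) + α) + π * sawtooth ((j + 1 : ℕ) * (n / k) - α)))) :=
    tendsto_finsetSum _ fun j _ => ((arg_tendsto _).add (arg_tendsto _)).const_mul _
  have h5 := tendsto_nhds_unique (h2.congr' h3) h4
  rw [h5]
  refine Finset.sum_congr rfl fun j _ => ?_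
  ring

lemma cot_bound_half (y : ℝ) (h0 : 0 < y) (h1 : y ≤ π / 2) :
    |Real.cos y / Real.sin y - 1 / y| ≤ 2 := by
  have hs : 2 / π * y ≤ Real.sin y := Real.mul_le_sin h0.le h1
  have hpi := Real.pi_pos
  have hpi4 := Real.pi_le_four
  have hs0 : 0 < Real.sin y := Real.sin_pos_of_pos_of_lt_pi h0 (by linarith)
  have hsy : Real.sin y ≤ y := Real.sin_le h0.le
  have hc : 1 - y ^ 2 / 2 ≤ Real.cos y := Real.one_sub_sq_div_two_le_cos
  have hc1 : y * Real.cos y ≤ Real.sin y := by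
    rcases h1.lt_or_eq with h | h
    · have := Real.lt_tan h0 h
      have hcos : 0 < Real.cos y := Real.cos_pos_of_mem_Ioo ⟨by linarith, h⟩
      rw [Real.tan_eq_sin_div_cos, lt_div_iff₀ hcos] at this
      exact this.le
    · rw [h, Real.cos_pi_div_two]; simp
  have e : Real.cos y / Real.sin y - 1 / y = (y * Real.cos y - Real.sin y) / (y * Real.sin y) := by
    field_simp
  rw [e, abs_div, abs_of_nonpos (by linarith), abs_of_pos (by positivity), div_le_iff₀ (by positivity)]
  have hs2 : y / 2 ≤ Real.sin y := by
    refine le_trans ?_ hs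
    rw [div_mul_eq_mul_div, div_le_div_iff₀ (by norm_num) hpi]
    nlinarith
  have hy2 : y ≤ 2 := by linarith
  have : -(y * Real.cos y - Real.sin y) ≤ y * (y ^ 2 / 2) := by nlinarith
  nlinarith [mul_pos h0 h0]

lemma cot_bound (x : ℝ) (h0 : 0 < x) (h1 : x < 1) :
    |π * (Real.cos (π * x) / Real.sin (π * x)) - (1 / x - 1 / (1 - x))| ≤ 10 := by
  have hpi := Real.pi_pos
  have hpi4 := Real.pi_le_four
  have main : ∀ x : ℝ, 0 < x → x ≤ 1 / 2 →
      |π * (Real.cos (π * x) / Real.sin (π * x)) - (1 / x - 1 / (1 - x))| ≤ 10 := by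
    intro x h0 h1
    have hb := cot_bound_half (π * x) (by positivity) (by nlinarith)
    have e : π * (Real.cos (π * x) / Real.sin (π * x)) - (1 / x - 1 / (1 - x)) =
        π * (Real.cos (π * x) / Real.sin (π * x) - 1 / (π * x)) + 1 / (1 - x) := by
      have : π * (1 / (π * x)) = 1 / x := by field_simp
      linear_combination this
    rw [e]
    have h2 : |1 / (1 - x)| ≤ 2 := by
      rw [abs_of_pos (by apply one_div_pos.2; linarith), div_le_iff₀ (by linarith)]; linarith
    refine (abs_add_le _ _).trans ?_
    rw [abs_mul, abs_of_pos hpi]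
    nlinarith
  rcases le_total x (1 / 2) with h | h
  · exact main x h0 h
  · have := main (1 - x) (by linarith) (by linarith)
    have e : π * (1 - x) = π - π * x := by ring
    rw [e, Real.cos_pi_sub, Real.sin_pi_sub, ← abs_neg] at this
    convert this using 2
    rw [sub_sub_cancel]
    ring

lemma V1_approx (k : ℕ) (hk : 1 ≤ k) (n : ℤ) (α V1 : ℝ)
    (hV : Tendsto (V1sum ((n : ℝ) / k) α) atTop (nhds V1)) :
    |V1| ≤ |∑ j ∈ Finset.range (k - 1), sawtooth ((j + 1 : ℕ) * (n / k) + α) / (j + 1)| +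
      |∑ j ∈ Finset.range (k - 1), sawtooth ((j + 1 : ℕ) * (n / k) + -α) / (j + 1)| + 5 := by
  have k0 : (0 : ℝ) < k := by positivity
  set g : ℕ → ℝ := fun j => sawtooth ((j + 1 : ℕ) * (n / k) + α) + sawtooth ((j + 1 : ℕ) * (n / k) - α) with hg
  have hV1 := V1_formula k hk n α V1 hV
  have hodd : ∑ j ∈ Finset.range (k - 1), 1 / ((k : ℝ) - (j + 1)) * g j =
      - ∑ j ∈ Finset.range (k - 1), 1 / ((j : ℝ) + 1) * g j := by
    rw [← Finset.sum_range_reflect, ← Finset.sum_neg_distrib]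
    refine Finset.sum_congr rfl fun j hj => ?_
    have hj' := Finset.mem_range.1 hj
    have c1 : ((k - 1 - 1 - j : ℕ) : ℝ) = k - 1 - 1 - j := by
      rw [Nat.cast_sub (by omega), Nat.cast_sub (by omega), Nat.cast_sub (by omega)]; simp
    have gg : g (k - 1 - 1 - j) = - g j := by
      simp only [hg]
      have s1 : ((k - 1 - 1 - j + 1 : ℕ) : ℝ) * (n / k) + α = -((j + 1 : ℕ) * (n / k) - α) + (n : ℤ) := by
        push_cast; rw [c1]; field_simp; ring
      have s2 : ((k - 1 - 1 - j + 1 : ℕ) : ℝ) * (n / k) - α = -((j + 1 : ℕ) * (n / k) + α) + (n : ℤ) := by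
        push_cast; rw [c1]; field_simp; ring
      rw [s1, s2, saw_add_int, saw_add_int, saw_neg, saw_neg]; ring
    rw [gg, c1]
    have : (k : ℝ) - (k - 1 - 1 - j + 1) = j + 1 := by ring
    rw [this]; ring
  have hmain : ∑ j ∈ Finset.range (k - 1), 1 / ((j : ℝ) + 1) * g j =
      ∑ j ∈ Finset.range (k - 1), 1 / 2 * (1 / ((j : ℝ) + 1) - 1 / ((k : ℝ) - (j + 1))) * g j := by
    have : ∑ j ∈ Finset.range (k - 1), 1 / 2 * (1 / ((j : ℝ) + 1) - 1 / ((k : ℝ) - (j + 1))) * g j =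
        1 / 2 * (∑ j ∈ Finset.range (k - 1), 1 / ((j : ℝ) + 1) * g j -
          ∑ j ∈ Finset.range (k - 1), 1 / ((k : ℝ) - (j + 1)) * g j) := by
      rw [← Finset.sum_sub_distrib, Finset.mul_sum]
      refine Finset.sum_congr rfl fun j _ => ?_
      ring
    rw [this, hodd]; ring
  have herr : |V1 - ∑ j ∈ Finset.range (k - 1), 1 / ((j : ℝ) + 1) * g j| ≤ 5 := by
    rw [hmain, hV1, ← Finset.sum_sub_distrib]
    calc _ ≤ ∑ j ∈ Finset.range (k - 1), 5 / (k : ℝ) := by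
          refine (Finset.abs_sum_le_sum_abs _ _).trans (Finset.sum_le_sum fun j hj => ?_)
          have hj' := Finset.mem_range.1 hj
          have hjk : (j : ℝ) + 1 < k := by exact_mod_cast (by omega : j + 1 < k)
          have hjk' : (k : ℝ) - (j + 1) ≠ 0 := by linarith
          have hb := cot_bound (((j : ℝ) + 1) / k) (by positivity) (by rw [div_lt_one k0]; exact hjk)
          have e : π / (2 * k) * cotw k j * g j -
              1 / 2 * (1 / ((j : ℝ) + 1) - 1 / ((k : ℝ) - (j + 1))) * g j =
              1 / (2 * k) * (π * (Real.cos (π * (((j : ℝ) + 1) / k)) / Real.sin (π * (((j : ℝ) + 1) / k))) -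
                (1 / (((j : ℝ) + 1) / k) - 1 / (1 - ((j : ℝ) + 1) / k))) * g j := by
            have e1 : 1 / (1 - ((j : ℝ) + 1) / k) = k * (1 / ((k : ℝ) - (j + 1))) := by
              rw [one_sub_div k0.ne', one_div_div]; ring
            have e2 : 1 / (((j : ℝ) + 1) / k) = k * (1 / ((j : ℝ) + 1)) := by
              rw [one_div_div]; ring
            have e3 : π * (((j : ℝ) + 1) / k) = π * ((j : ℝ) + 1) / k := by ring
            rw [e1, e2, e3]
            unfold cotw
            generalize Real.cos (π * (j + 1) / k) / Real.sin (π * (j + 1) / k) = C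
            generalize 1 / ((j : ℝ) + 1) = X
            generalize 1 / ((k : ℝ) - (j + 1)) = Y
            field_simp
          change |π / (2 * k) * cotw k j * g j - _| ≤ _
          rw [e, abs_mul, abs_mul, abs_of_pos (by positivity : 0 < 1 / (2 * (k : ℝ)))]
          have hgb : |g j| ≤ 1 := by
            refine (abs_add_le _ _).trans ?_
            have := saw_abs ((j + 1 : ℕ) * (n / k) + α)
            have := saw_abs ((j + 1 : ℕ) * (n / k) - α)
            linarith
          calc _ ≤ 1 / (2 * (k : ℝ)) * 10 * 1 := by gcongr
            _ = 5 / k := by field_simp; norm_num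
      _ = (k - 1 : ℕ) * (5 / (k : ℝ)) := by simp
      _ ≤ k * (5 / (k : ℝ)) := by gcongr; omega
      _ = 5 := by field_simp
  have hsplit : ∑ j ∈ Finset.range (k - 1), 1 / ((j : ℝ) + 1) * g j =
      ∑ j ∈ Finset.range (k - 1), sawtooth ((j + 1 : ℕ) * (n / k) + α) / (j + 1) +
      ∑ j ∈ Finset.range (k - 1), sawtooth ((j + 1 : ℕ) * (n / k) + -α) / (j + 1) := by
    rw [← Finset.sum_add_distrib]
    refine Finset.sum_congr rfl fun j _ => ?_
    simp only [hg, ← sub_eq_add_neg]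
    ring
  rw [hsplit] at herr
  set X := ∑ j ∈ Finset.range (k - 1), sawtooth ((j + 1 : ℕ) * (n / k) + α) / ((j : ℝ) + 1)
  set Y := ∑ j ∈ Finset.range (k - 1), sawtooth ((j + 1 : ℕ) * (n / k) + -α) / ((j : ℝ) + 1)
  have e : V1 = (V1 - (X + Y)) + X + Y := by ring
  rw [e]
  have := abs_add_le (V1 - (X + Y) + X) Y
  have := abs_add_le (V1 - (X + Y)) X
  linarith

lemma saw_weighted_bound (r k : ℕ) (b v : ℕ → ℕ) (hv0 : v 0 = 1) (hk : v (r + 1) = k)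
    (hb : ∀ m, m + 2 ≤ r + 1 → 1 ≤ b (m + 2))
    (hpos : ∀ m, m ≤ r + 1 → 1 ≤ v m)
    (hmono : ∀ m, m + 1 ≤ r + 1 → v m ≤ v (m + 1))
    (hrec : ∀ m, m + 2 ≤ r + 1 → v (m + 2) = b (m + 2) * v (m + 1) + v m) (β : ℝ) :
    |∑ c ∈ Finset.range (k - 1), sawtooth ((c + 1 : ℕ) * ((v r : ℝ) / k) + β) / (c + 1)| ≤
      1 / (2 * k) * ∑ m ∈ Finset.range (r + 1), (v (m + 1) : ℝ) * Real.log (v (m + 1) / v m) + 20 := by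
  apply main_sum (r + 1) k v hv0 hk hpos hmono
  · intro m hm
    rw [hrec m hm]
    have := hb m hm
    nlinarith
  · intro m hm n
    apply saw_sum_bound
    intro β'
    have k0 : (0 : ℝ) < k := by rw [← hk]; exact_mod_cast hpos (r + 1) le_rfl
    rcases Nat.lt_or_ge m (r + 1) with h | h
    · obtain ⟨l, rfl⟩ : ∃ l, r = m + l := ⟨r - m, by omega⟩
      have := TF_chain (m + l + 1) b v hpos hmono hrec m l (by omega) n β'
      rw [hk] at this
      rw [Finset.sum_Ico_eq_sum_range]
      have e : m + l + 1 - m = l + 1 := by omega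
      rw [e]
      exact this
    · have e : m = r + 1 := by omega
      subst e
      rw [Finset.Ico_self, Finset.sum_empty, hk]
      refine (TF_abs n _ β').trans_eq ?_
      field_simp
      ring

/-- Bound for `V₁(h̄/k, α)` in terms of the continued fraction expansion of `h/k`:
`|V₁(h̄/k, α)| ≤ (1/k) ∑_{m=1}^{r} v_m log(v_m/v_{m-1}) + C` uniformly in `α ∈ (1/k)ℤ`,
where `h̄` is any inverse of `h` mod `k` and `v_0, …, v_r` are the denominators of the
convergents of `h/k = [0; b_1, …, b_r]` (with numerators `u_0, …, u_r`). -/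
theorem V1_inverse_bound_continued_fraction :
    ∃ C : ℝ, 0 < C ∧ ∀ h k : ℕ, 1 ≤ h → h < k → Nat.Coprime h k →
      ∀ hbar : ℤ, ((h : ℤ) * hbar) % (k : ℤ) = 1 % (k : ℤ) →
      ∀ (r : ℕ) (b u v : ℕ → ℕ),
        (∀ m, 1 ≤ m → m ≤ r → 1 ≤ b m) → (1 < r → 2 ≤ b r) →
        v 0 = 1 → u 0 = 0 →
        (1 ≤ r → v 1 = b 1) → (1 ≤ r → u 1 = 1) →
        (∀ m, 2 ≤ m → m ≤ r → v m = b m * v (m - 1) + v (m - 2)) →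
        (∀ m, 2 ≤ m → m ≤ r → u m = b m * u (m - 1) + u (m - 2)) →
        v r = k → u r = h →
        ∀ α : ℝ, (∃ j : ℤ, α = (j : ℝ) / k) →
          ∀ V1 : ℝ, Tendsto (V1sum ((hbar : ℝ) / k) α) atTop (nhds V1) →
            |V1| ≤ (1 / (k : ℝ)) * (∑ m ∈ Finset.Icc 1 r,
                (v m : ℝ) * Real.log ((v m : ℝ) / (v (m - 1) : ℝ))) + C := by
  refine ⟨50, by norm_num, ?_⟩
  intro h k hh1 hhk hcop hbar hinv r b u v hb hbr hv0 hu0 hv1 hu1 hvrec hurec hvr hur α hα V1 hV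
  have hr : r ≠ 0 := by
    rintro rfl
    omega
  obtain ⟨s, rfl⟩ : ∃ s, r = s + 1 := ⟨r - 1, by omega⟩
  have hrec : ∀ m, m + 2 ≤ s + 1 → v (m + 2) = b (m + 2) * v (m + 1) + v m := by
    intro m hm
    exact hvrec (m + 2) (by omega) hm
  have hrecu : ∀ m, m + 2 ≤ s + 1 → u (m + 2) = b (m + 2) * u (m + 1) + u m := by
    intro m hm
    exact hurec (m + 2) (by omega) hm
  have hmono : ∀ m, m + 1 ≤ s + 1 → v m ≤ v (m + 1) := by
    intro m hm
    rcases m with _ | m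
    · rw [hv0, hv1 (by omega)]; exact hb 1 le_rfl (by omega)
    · rw [hrec m hm]
      have := hb (m + 2) (by omega) hm
      nlinarith
  have hpos : ∀ m, m ≤ s + 1 → 1 ≤ v m := by
    intro m
    induction m with
    | zero => intro _; rw [hv0]
    | succ m ih => intro hm; exact (ih (by omega)).trans (hmono m hm)
  have hdet : ∀ m, m + 1 ≤ s + 1 → (u (m + 1) : ℤ) * v m - u m * v (m + 1) = (-1) ^ m := by
    intro m
    induction m with
    | zero => intro hm; simp [hu1 (by omega), hv0, hu0]
    | succ m ih =>
      intro hm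
      rw [hrec m hm, hrecu m hm]
      push_cast
      rw [pow_succ, ← ih (by omega)]
      ring
  have hd := hdet s le_rfl
  rw [hvr, hur] at hd
  have hkz : (k : ℤ) ≠ 0 := by omega
  obtain ⟨t, ht⟩ : (k : ℤ) ∣ (h : ℤ) * hbar - 1 := Int.ModEq.dvd (Int.ModEq.symm hinv)
  obtain ⟨ε, w, hε, hw⟩ : ∃ ε w : ℤ, (ε = 1 ∨ ε = -1) ∧ hbar = ε * v s + k * w := by
    refine ⟨(-1) ^ s, (-1) ^ s * (t * v s - hbar * u s), neg_one_pow_eq_or ℤ s, ?_⟩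
    have h2 : ((-1 : ℤ) ^ s) * (-1) ^ s = 1 := by rw [← mul_pow]; simp
    have h3 : hbar * (-1) ^ s = v s + k * (t * v s - hbar * u s) := by
      rw [← hd]; linear_combination (v s : ℤ) * ht
    linear_combination (-1) ^ s * h3 - hbar * h2
  have k0 : (0 : ℝ) < k := by exact_mod_cast (by omega : 0 < k)
  have hbound : ∀ β : ℝ,
      |∑ j ∈ Finset.range (k - 1), sawtooth ((j + 1 : ℕ) * ((hbar : ℝ) / k) + β) / (j + 1)| ≤
      1 / (2 * k) * ∑ m ∈ Finset.range (s + 1), (v (m + 1) : ℝ) * Real.log (v (m + 1) / v m) + 20 := by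
    intro β
    have hS := saw_weighted_bound s k b v hv0 hvr (fun m hm => hb (m + 2) (by omega) hm) hpos hmono hrec
    have hq : (hbar : ℝ) / k = ε * ((v s : ℝ) / k) + w := by
      rw [hw]; push_cast; field_simp
    rcases hε with rfl | rfl
    · have : ∀ j : ℕ, sawtooth ((j + 1 : ℕ) * ((hbar : ℝ) / k) + β) =
          sawtooth ((j + 1 : ℕ) * ((v s : ℝ) / k) + β) := by
        intro j
        rw [← saw_add_int ((j + 1 : ℕ) * ((v s : ℝ) / k) + β) ((j + 1) * w), hq]
        congr 1; push_cast; ring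
      simp only [this]
      exact hS β
    · have : ∀ j : ℕ, sawtooth ((j + 1 : ℕ) * ((hbar : ℝ) / k) + β) =
          -sawtooth ((j + 1 : ℕ) * ((v s : ℝ) / k) + -β) := by
        intro j
        rw [← saw_neg, ← saw_add_int (-((j + 1 : ℕ) * ((v s : ℝ) / k) + -β)) ((j + 1) * w), hq]
        congr 1; push_cast; ring
      simp only [this, neg_div, Finset.sum_neg_distrib, abs_neg]
      exact hS (-β)
  have hfin := V1_approx k (by omega) hbar α V1 hV
  have b1 := hbound α
  have b2 := hbound (-α)
  have hsum : ∑ m ∈ Finset.Icc 1 (s + 1), (v m : ℝ) * Real.log ((v m : ℝ) / (v (m - 1) : ℝ)) =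
      ∑ m ∈ Finset.range (s + 1), (v (m + 1) : ℝ) * Real.log (v (m + 1) / v m) := by
    have h := Finset.sum_Ico_add' (fun m => (v m : ℝ) *
      Real.log ((v m : ℝ) / (v (m - 1) : ℝ))) 0 (s + 1) 1
    simp only [Nat.add_sub_cancel] at h
    rw [Finset.range_eq_Ico, h]
    rfl
  rw [hsum]
  have e : 1 / (k : ℝ) * ∑ m ∈ Finset.range (s + 1), (v (m + 1) : ℝ) * Real.log (v (m + 1) / v m) =
    2 * (1 / (2 * k) * ∑ m ∈ Finset.range (s + 1), (v (m + 1) : ℝ) * Real.log (v (m + 1) / v m)) := by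
    field_simp
  rw [e]
  linarith
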